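/- Let A₁ ∈ M_{n₁}(ℍ), …, A_k ∈ M_{n_k}(ℍ) and suppose that each numerical range W(Aᵢ) is a convex subset of ℍ (viewed as the 4-dimensional real vector space). Then the numerical range of the block-diagonal direct sum equals the convex hull of the union: W(A₁ ⊕ ⋯ ⊕ A_k) = conv(W(A₁) ∪ ⋯ ∪ W(A_k)). -/

import Mathlib

/-- The quaternionic numerical range of a square quaternionic matrix. -/
def qnr {ι : Type*} [Fintype ι] [DecidableEq ι] (A : Matrix ι ι (Quaternion ℝ)) :
    Set (Quaternion ℝ) :=
  {q | ∃ x : ι → Quaternion ℝ, (∑ i, ‖x i‖ ^ 2) = 1 ∧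
    q = ∑ i, ∑ j, star (x i) * A i j * x j}

/-!
Dropping the normalization of `x` turns the numerical range into a cone of pairs `(‖x‖², x⋆Ax)`
in `ℝ × ℍ`, whose slice at height `1` is `W(A)`. This cone is convex exactly when `W(A)` is, and
the cone of a direct sum is the Minkowski sum of the cones of the blocks. Hence the cone of the
direct sum is convex, and so is its slice; conversely a point of that slice is a sum of points of
the blocks' cones whose heights add up to `1`, i.e. a convex combination of points of the `W(Aᵢ)`.
-/

open scoped Matrix Pointwise Quaternion

theorem blockDiagonal'_mulVec_apply {o R : Type*} {m n : o → Type*} [Fintype o] [DecidableEq o]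
    [∀ i, Fintype (n i)] [NonUnitalNonAssocSemiring R] (A : ∀ i, Matrix (m i) (n i) R)
    (x : (Σ i, n i) → R) (i : o) (j : m i) :
    (Matrix.blockDiagonal' A *ᵥ x) ⟨i, j⟩ = (A i *ᵥ fun l => x ⟨i, l⟩) j := by
  simp only [Matrix.mulVec, dotProduct, Fintype.sum_sigma]
  refine (Fintype.sum_eq_single i fun i' hi' => ?_).trans ?_
  · simp [Matrix.blockDiagonal'_apply_ne A _ _ hi'.symm]
  · simp

/-- The cone of all pairs `(‖x‖², x⋆Ax)` with `x` an arbitrary quaternionic vector: the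
homogenization of the numerical range, which is its slice at height `1`. -/
def qnrCone {ι : Type*} [Fintype ι] (A : Matrix ι ι ℍ[ℝ]) : Set (ℝ × ℍ[ℝ]) :=
  Set.range fun x : ι → ℍ[ℝ] => (∑ i, ‖x i‖ ^ 2, star x ⬝ᵥ A *ᵥ x)

section Cone

variable {ι : Type*} [Fintype ι] {A : Matrix ι ι ℍ[ℝ]} {p : ℝ × ℍ[ℝ]}

theorem mem_qnr_iff_mem_qnrCone [DecidableEq ι] {q : ℍ[ℝ]} : q ∈ qnr A ↔ (1, q) ∈ qnrCone A := by
  simp [qnr, qnrCone, dotProduct, Matrix.mulVec, Finset.mul_sum, mul_assoc, eq_comm]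

theorem zero_mem_qnrCone : 0 ∈ qnrCone A := ⟨0, by ext <;> simp⟩

theorem fst_nonneg_of_mem_qnrCone (hp : p ∈ qnrCone A) : 0 ≤ p.1 := by
  obtain ⟨x, rfl⟩ := hp
  positivity

theorem eq_zero_of_mem_qnrCone (hp : p ∈ qnrCone A) (hp₁ : p.1 = 0) : p = 0 := by
  obtain ⟨x, rfl⟩ := hp
  have hx : x = 0 := by
    simpa [Finset.sum_eq_zero_iff_of_nonneg, funext_iff] using hp₁
  ext <;> simp [hx]

theorem smul_mem_qnrCone {c : ℝ} (hc : 0 ≤ c) (hp : p ∈ qnrCone A) : c • p ∈ qnrCone A := by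
  obtain ⟨x, rfl⟩ := hp
  refine ⟨√c • x, Prod.ext ?_ ?_⟩
  · simp [norm_smul, mul_pow, Finset.mul_sum, Real.sq_sqrt hc]
  · have hstar : star (√c • x) = √c • star x := funext fun i => Quaternion.star_smul _ _
    simp [hstar, Matrix.mulVec_smul, smul_smul, Real.mul_self_sqrt hc]

variable [DecidableEq ι]

theorem inv_smul_mem_qnr (hp : p ∈ qnrCone A) (hp₁ : p.1 ≠ 0) : p.1⁻¹ • p.2 ∈ qnr A := by
  have h := smul_mem_qnrCone (inv_nonneg.2 (fst_nonneg_of_mem_qnrCone hp)) hp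
  rw [Prod.smul_def, smul_eq_mul, inv_mul_cancel₀ hp₁] at h
  exact mem_qnr_iff_mem_qnrCone.2 h

theorem add_mem_qnrCone (hA : Convex ℝ (qnr A)) {p₁ p₂ : ℝ × ℍ[ℝ]} (hp₁ : p₁ ∈ qnrCone A)
    (hp₂ : p₂ ∈ qnrCone A) : p₁ + p₂ ∈ qnrCone A := by
  by_cases h₁ : p₁.1 = 0
  · simpa [eq_zero_of_mem_qnrCone hp₁ h₁] using hp₂
  by_cases h₂ : p₂.1 = 0
  · simpa [eq_zero_of_mem_qnrCone hp₂ h₂] using hp₁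
  have ht₁ := fst_nonneg_of_mem_qnrCone hp₁
  have ht₂ := fst_nonneg_of_mem_qnrCone hp₂
  obtain ⟨w, hw, hw_eq⟩ : p₁.2 + p₂.2 ∈ (p₁.1 + p₂.1) • qnr A := by
    rw [hA.add_smul ht₁ ht₂]
    exact Set.add_mem_add ⟨_, inv_smul_mem_qnr hp₁ h₁, smul_inv_smul₀ h₁ _⟩
      ⟨_, inv_smul_mem_qnr hp₂ h₂, smul_inv_smul₀ h₂ _⟩
  have h := smul_mem_qnrCone (add_nonneg ht₁ ht₂) (mem_qnr_iff_mem_qnrCone.1 hw)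
  convert h using 1
  exact Prod.ext (mul_one _).symm hw_eq.symm

theorem convex_qnrCone_iff : Convex ℝ (qnrCone A) ↔ Convex ℝ (qnr A) := by
  constructor
  · intro h q hq r hr a b ha hb hab
    have hmem := h (mem_qnr_iff_mem_qnrCone.1 hq) (mem_qnr_iff_mem_qnrCone.1 hr) ha hb hab
    exact mem_qnr_iff_mem_qnrCone.2 (by simpa [hab] using hmem)
  · intro h p₁ hp₁ p₂ hp₂ a b ha hb _
    exact add_mem_qnrCone h (smul_mem_qnrCone ha hp₁) (smul_mem_qnrCone hb hp₂)

end Cone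

section BlockDiagonal

variable {o : Type*} {m : o → Type*} [Fintype o] [DecidableEq o] [∀ i, Fintype (m i)]

theorem qnrCone_blockDiagonal' (A : ∀ i, Matrix (m i) (m i) ℍ[ℝ]) :
    qnrCone (Matrix.blockDiagonal' A) = ∑ i, qnrCone (A i) := by
  have hblocks (x : (Σ i, m i) → ℍ[ℝ]) :
      (∑ k, ‖x k‖ ^ 2, star x ⬝ᵥ Matrix.blockDiagonal' A *ᵥ x) =
        ∑ i, (∑ j, ‖x ⟨i, j⟩‖ ^ 2, (star fun j => x ⟨i, j⟩) ⬝ᵥ A i *ᵥ fun j => x ⟨i, j⟩) := by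
    apply Prod.ext
    · simp [Prod.fst_sum, Fintype.sum_sigma]
    · simp [Prod.snd_sum, dotProduct, Fintype.sum_sigma, blockDiagonal'_mulVec_apply]
  ext p
  simp only [Set.mem_fintype_sum, exists_prop]
  constructor
  · rintro ⟨x, rfl⟩
    exact ⟨_, fun i => ⟨fun j => x ⟨i, j⟩, rfl⟩, (hblocks x).symm⟩
  · rintro ⟨g, hg, rfl⟩
    choose x hx using hg
    exact ⟨fun k => x k.1 k.2, (hblocks _).trans (Finset.sum_congr rfl fun i _ => hx i)⟩

variable [∀ i, DecidableEq (m i)]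

theorem qnr_subset_qnr_blockDiagonal' (A : ∀ i, Matrix (m i) (m i) ℍ[ℝ]) (i : o) :
    qnr (A i) ⊆ qnr (Matrix.blockDiagonal' A) := by
  intro q hq
  rw [mem_qnr_iff_mem_qnrCone, qnrCone_blockDiagonal', Set.mem_fintype_sum]
  refine ⟨Pi.single i (1, q), fun i' => ?_, Fintype.sum_pi_single' i _⟩
  obtain rfl | hi' := eq_or_ne i' i
  · simpa using mem_qnr_iff_mem_qnrCone.1 hq
  · simpa [hi'] using zero_mem_qnrCone

theorem qnr_blockDiagonal'_subset_convexHull (A : ∀ i, Matrix (m i) (m i) ℍ[ℝ]) :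
    qnr (Matrix.blockDiagonal' A) ⊆ convexHull ℝ (⋃ i, qnr (A i)) := by
  intro q hq
  rw [mem_qnr_iff_mem_qnrCone, qnrCone_blockDiagonal', Set.mem_fintype_sum] at hq
  obtain ⟨g, hg, hsum⟩ := hq
  have hheight : ∑ i, (g i).1 = 1 := by simpa [Prod.fst_sum] using congr_arg Prod.fst hsum
  have hform : ∑ i, (g i).1 • (g i).1⁻¹ • (g i).2 = q := by
    have hg₂ (i : o) : (g i).1 • (g i).1⁻¹ • (g i).2 = (g i).2 := by
      by_cases h : (g i).1 = 0
      · simp [eq_zero_of_mem_qnrCone (hg i) h]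
      · exact smul_inv_smul₀ h _
    simpa [hg₂, Prod.snd_sum] using congr_arg Prod.snd hsum
  rw [← hform, ← finsum_eq_sum_of_fintype]
  refine (convex_convexHull ℝ _).finsum_mem (fun i => fst_nonneg_of_mem_qnrCone (hg i))
    (by rwa [finsum_eq_sum_of_fintype]) fun i hi => ?_
  exact subset_convexHull ℝ _ (Set.mem_iUnion_of_mem i (inv_smul_mem_qnr (hg i) hi))

theorem convex_qnr_blockDiagonal' {A : ∀ i, Matrix (m i) (m i) ℍ[ℝ]}
    (hconv : ∀ i, Convex ℝ (qnr (A i))) : Convex ℝ (qnr (Matrix.blockDiagonal' A)) := by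
  rw [← convex_qnrCone_iff, qnrCone_blockDiagonal']
  exact convex_sum _ fun i _ => convex_qnrCone_iff.2 (hconv i)

theorem qnr_blockDiagonal_eq_convexHull_general {A : ∀ i, Matrix (m i) (m i) ℍ[ℝ]}
    (hconv : ∀ i, Convex ℝ (qnr (A i))) :
    qnr (Matrix.blockDiagonal' A) = convexHull ℝ (⋃ i, qnr (A i)) :=
  (qnr_blockDiagonal'_subset_convexHull A).antisymm <|
    convexHull_min (Set.iUnion_subset (qnr_subset_qnr_blockDiagonal' A))
      (convex_qnr_blockDiagonal' hconv)

end BlockDiagonal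

/-- If each `W(Aᵢ)` is convex, then the numerical range of the block-diagonal
direct sum `A₁ ⊕ ⋯ ⊕ A_k` equals the convex hull of the union of the `W(Aᵢ)`. -/
theorem qnr_blockDiagonal_eq_convexHull (k : ℕ) (n : Fin k → ℕ)
    (A : ∀ i : Fin k, Matrix (Fin (n i)) (Fin (n i)) (Quaternion ℝ))
    (hconv : ∀ i, Convex ℝ (qnr (A i))) :
    qnr (Matrix.blockDiagonal' A) = convexHull ℝ (⋃ i, qnr (A i)) :=
  qnr_blockDiagonal_eq_convexHull_general hconv
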